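/- Let γ > −1. For x = (x₁,x₂), y = (y₁,y₂) ∈ [−1,1]², set s := (2x₁x₂, x₁²+x₂²−1), t := (2y₁y₂, y₁²+y₂²−1), and d^{(i,j)} := a_{w^{(i,j)}}^γ / a_w^γ. Then for every n ≥ 0 the reproducing kernel of Π_n² in L²(𝒲_γ) on [−1,1]² satisfies K_n(𝒲_γ; x, y) = K_{⌊n/2⌋}(W_γ; s, t) + d^{(1,1)} (x₁²−x₂²)(y₁²−y₂²) K_{⌊n/2⌋−1}(W_γ^{(1,1)}; s, t) + d^{(0,1)} (x₁+x₂)(y₁+y₂) K_{⌊(n−1)/2⌋}(W_γ^{(0,1)}; s, t) + d^{(1,0)} (x₁−x₂)(y₁−y₂) K_{⌊(n−1)/2⌋}(W_γ^{(1,0)}; s, t), with the convention K_{m} := 0 when m < 0. -/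

import Mathlib

open MeasureTheory Real Set Filter
open scoped ENNReal

noncomputable section

/-- The parabolic-type domain `Ω`, the image of the triangle `-1 < x < y < 1`
under `(x, y) ↦ (x + y, x y)`. -/
def omegaDom : Set (ℝ × ℝ) :=
  {q | ∃ x y : ℝ, -1 < x ∧ x < y ∧ y < 1 ∧ q = (x + y, x * y)}

/-- The square `[-1,1]²`. -/
def sqDom : Set (ℝ × ℝ) := Icc (-1 : ℝ) 1 ×ˢ Icc (-1 : ℝ) 1

/-- The open triangle `-1 < x < y < 1`. -/
def triDom : Set (ℝ × ℝ) := {q | -1 < q.1 ∧ q.1 < q.2 ∧ q.2 < 1}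

/-- The smaller root `x(u,v)` of `t² - u t + v = 0`. -/
def xRoot (q : ℝ × ℝ) : ℝ := (q.1 - Real.sqrt (q.1 ^ 2 - 4 * q.2)) / 2

/-- The larger root `y(u,v)` of `t² - u t + v = 0`. -/
def yRoot (q : ℝ × ℝ) : ℝ := (q.1 + Real.sqrt (q.1 ^ 2 - 4 * q.2)) / 2

/-- Evaluation of a two-variable polynomial at a point of `ℝ²`. -/
def evalP (P : MvPolynomial (Fin 2) ℝ) (q : ℝ × ℝ) : ℝ :=
  MvPolynomial.eval ![q.1, q.2] P

/-- The space `V_n(W)` of orthogonal polynomials of degree `n` for the weight `W`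
on the domain `D`: polynomials of exact total degree `n` orthogonal to all
polynomials of lower degree. -/
def Vpoly (D : Set (ℝ × ℝ)) (W : ℝ × ℝ → ℝ) (n : ℕ) : Set (MvPolynomial (Fin 2) ℝ) :=
  {P | P.totalDegree = n ∧ ∀ Q : MvPolynomial (Fin 2) ℝ, Q.totalDegree < n →
    (∫ q in D, evalP P q * evalP Q q * W q) = 0}

/-- `Q 0, …, Q n` is an orthonormal basis of `V_n(W)` on `D`. -/
def isONBVn (D : Set (ℝ × ℝ)) (W : ℝ × ℝ → ℝ) (n : ℕ)
    (Q : ℕ → MvPolynomial (Fin 2) ℝ) : Prop :=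
  (∀ k, k ≤ n → Q k ∈ Vpoly D W n) ∧
  (∀ k, k ≤ n → ∀ j, j ≤ n →
    (∫ q in D, evalP (Q k) q * evalP (Q j) q * W q) = if k = j then 1 else 0) ∧
  (∀ R ∈ Vpoly D W n, R ∈ Submodule.span ℝ (Q '' Set.Iic n))

/-- `K` is the reproducing kernel of `Π_n²` in `L²(W)` on the domain `D`:
it is a polynomial function, for each fixed `x ∈ D` it is a polynomial of total
degree `≤ n` in the second variable, and it reproduces every polynomial of total
degree `≤ n`. -/
def IsRK (D : Set (ℝ × ℝ)) (W : ℝ × ℝ → ℝ) (n : ℕ) (K : ℝ × ℝ → ℝ × ℝ → ℝ) : Prop :=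
  (∃ KP : MvPolynomial (Fin 4) ℝ,
    ∀ x y : ℝ × ℝ, K x y = MvPolynomial.eval ![x.1, x.2, y.1, y.2] KP) ∧
  (∀ x ∈ D, ∃ P : MvPolynomial (Fin 2) ℝ, P.totalDegree ≤ n ∧ ∀ y, K x y = evalP P y) ∧
  (∀ P : MvPolynomial (Fin 2) ℝ, P.totalDegree ≤ n →
    ∀ x ∈ D, (∫ y in D, K x y * evalP P y * W y) = evalP P x)

/-- `p` is the sequence of orthonormal polynomials with respect to the weight `w`
on `[-1,1]`: `p n` has degree exactly `n`, positive leading coefficient, and the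
`p n` are orthonormal in `L²(w)`. -/
def IsONPS (w : ℝ → ℝ) (p : ℕ → Polynomial ℝ) : Prop :=
  (∀ n, (p n).natDegree = n) ∧ (∀ n, 0 < (p n).leadingCoeff) ∧
  (∀ n m, (∫ x in Icc (-1:ℝ) 1, (p n).eval x * (p m).eval x * w x)
    = if n = m then 1 else 0)

/-- The Christoffel–Darboux kernel `k_n(x,y) = ∑_{j=0}^n p_j(x) p_j(y)`. -/
def CDK (p : ℕ → Polynomial ℝ) (n : ℕ) (x y : ℝ) : ℝ :=
  ∑ j ∈ Finset.range (n + 1), (p j).eval x * (p j).eval y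

/-- The Jacobi factor `J_{a,b}(x) = (1-x)^a (1+x)^b`. -/
def Jw (a b : ℝ) (x : ℝ) : ℝ := (1 - x) ^ a * (1 + x) ^ b

/-- The factor `J*_{a,b}(u,v) = (1-u+v)^a (1+u+v)^b` on `Ω`. -/
def JstarW (a b : ℝ) (q : ℝ × ℝ) : ℝ := (1 - q.1 + q.2) ^ a * (1 + q.1 + q.2) ^ b

/-- Modulus of continuity of `ψ` on `[-1,1]`. -/
def modCont (ψ : ℝ → ℝ) (t : ℝ) : ℝ :=
  sSup {d : ℝ | ∃ x ∈ Icc (-1:ℝ) 1, ∃ y ∈ Icc (-1:ℝ) 1, |x - y| ≤ t ∧ d = |ψ x - ψ y|}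

/-- The generalized Jacobi class `GJ`. -/
def IsGJ (w : ℝ → ℝ) : Prop :=
  ∃ (r : ℕ) (ψ : ℝ → ℝ) (γ₀ γ₁ : ℝ) (γs xs : Fin r → ℝ),
    -1 < γ₀ ∧ -1 < γ₁ ∧ (∀ i, -1 < γs i) ∧
    StrictMono xs ∧ (∀ i, xs i ∈ Ioo (-1:ℝ) 1) ∧
    ContinuousOn ψ (Icc (-1:ℝ) 1) ∧ (∀ x ∈ Icc (-1:ℝ) 1, 0 < ψ x) ∧
    IntegrableOn (fun t => modCont ψ t / t) (Ioc (0:ℝ) 1) ∧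
    (∀ x : ℝ, |x| ≤ 1 → w x = ψ x * (1 - x) ^ γ₀ * (1 + x) ^ γ₁ * ∏ i, |x - xs i| ^ γs i) ∧
    (∀ x : ℝ, 1 < |x| → w x = 0)

/-- The `L^p`-norm `‖f‖_{w,e}` on `[-1,1]` (as an extended nonnegative real). -/
def lpnormI (w : ℝ → ℝ) (e : ℝ) (f : ℝ → ℝ) : ℝ≥0∞ :=
  (∫⁻ x in Icc (-1:ℝ) 1, ENNReal.ofReal (|f x| ^ e * w x)) ^ (1 / e)

/-- The `L^p`-norm `‖f‖_{W,e}` on a planar domain `D` (as an extended nonnegative real). -/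
def lpnormD (D : Set (ℝ × ℝ)) (W : ℝ × ℝ → ℝ) (e : ℝ) (f : ℝ × ℝ → ℝ) : ℝ≥0∞ :=
  (∫⁻ q in D, ENNReal.ofReal (|f q| ^ e * W q)) ^ (1 / e)

/-- The operator `s_n^{i,j}(w; f, x)` built from the Christoffel–Darboux kernel of the
orthonormal polynomials `pij` of the weight `J_{i,j} w`. -/
def snOp (w : ℝ → ℝ) (pij : ℕ → Polynomial ℝ) (i j : ℝ) (n : ℕ) (f : ℝ → ℝ) (x : ℝ) : ℝ :=
  Jw (i/2) (j/2) x * ∫ y in Icc (-1:ℝ) 1, f y * CDK pij n x y * Jw (i/2) (j/2) y * w y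

/-- Substitution `(x, y) ↦ (2 x y, x² + y² - 1)` on two-variable polynomials. -/
def quadSub (P : MvPolynomial (Fin 2) ℝ) : MvPolynomial (Fin 2) ℝ :=
  MvPolynomial.aeval
    ![2 * MvPolynomial.X 0 * MvPolynomial.X 1,
      MvPolynomial.X 0 ^ 2 + MvPolynomial.X 1 ^ 2 - 1] P

/-- A one-variable polynomial viewed as a polynomial in the first variable. -/
def polyX (q : Polynomial ℝ) : MvPolynomial (Fin 2) ℝ :=
  Polynomial.aeval (MvPolynomial.X 0) q

/-- A one-variable polynomial viewed as a polynomial in the second variable. -/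
def polyY (q : Polynomial ℝ) : MvPolynomial (Fin 2) ℝ :=
  Polynomial.aeval (MvPolynomial.X 1) q

/-! The group generated by the reflections `(x, y) ↦ (y, x)` and `(x, y) ↦ (-x, -y)` of the square
has the invariants `u = 2xy` and `v = x² + y² - 1`, and `(x, y) ↦ (u, v)` maps the square
four-to-one onto `Ω` with Jacobian `4|x² - y²|`. Hence `|x² - y²| dx dy` is transported to
`du dv`. A polynomial of degree `≤ n` splits into its four isotypic parts
`(x - y)^i (x + y)^j c(u, v)` with `2 deg c + i + j ≤ n`; distinct parts are orthogonal by
symmetry, and `(x - y)^{2i} (x + y)^{2j} = (1 - u + v)^i (1 + u + v)^j` turns each part into the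
reproducing problem for the weight `W^{(i,j)}` on `Ω`. This argument needs `(u, v)` to lie in the
open set `Ω`; the remaining points of the square are limits of such points. -/

section LinearReflection

variable {E : Type*} [NormedAddCommGroup E] [NormedSpace ℝ E] [FiniteDimensional ℝ E]
  [MeasurableSpace E] [BorelSpace E] {μ : Measure E} [μ.IsAddHaarMeasure]

lemma ae_linearMap_ne_zero {L : E →ₗ[ℝ] ℝ} (hL : L ≠ 0) : ∀ᵐ x ∂μ, L x ≠ 0 := by
  have hker : μ (LinearMap.ker L) = 0 :=
    Measure.addHaar_submodule μ _ fun h ↦ hL (LinearMap.ker_eq_top.1 h)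
  exact compl_mem_ae_iff.2 hker

lemma setLIntegral_eq_two_mul_of_reflection {L : E →ₗ[ℝ] ℝ} (hL : L ≠ 0) {σ : E → E}
    (hσ : MeasurePreserving σ μ μ) (hLσ : ∀ x, L (σ x) = -L x) {s : Set E}
    (hs : MeasurableSet s) (hσs : σ ⁻¹' s = s) {f : E → ℝ≥0∞} (hf : Measurable f)
    (hfσ : ∀ x, f (σ x) = f x) :
    ∫⁻ x in s, f x ∂μ = 2 * ∫⁻ x in s ∩ {x | 0 < L x}, f x ∂μ := by
  have hpos : MeasurableSet {x | 0 < L x} :=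
    measurableSet_lt measurable_const L.continuous_of_finiteDimensional.measurable
  have hreflect : (s \ {x | 0 < L x} : Set E) =ᵐ[μ] σ ⁻¹' (s ∩ {x | 0 < L x}) := by
    rw [preimage_inter, hσs]
    filter_upwards [ae_linearMap_ne_zero (μ := μ) hL] with x hx
    refine propext (and_congr_right fun _ ↦ ?_)
    change ¬ 0 < L x ↔ 0 < L (σ x)
    rw [hLσ, neg_pos, not_lt, hx.le_iff_lt]
  rw [← lintegral_inter_add_sdiff f s hpos, setLIntegral_congr hreflect, two_mul,
    ← hσ.setLIntegral_comp_preimage (hs.inter hpos) hf]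
  simp only [hfσ]

end LinearReflection

lemma setIntegral_eq_zero_of_comp_eq_neg {α : Type*} [MeasurableSpace α] {μ : Measure α}
    {σ : α ≃ᵐ α} (hσ : MeasurePreserving σ μ μ) {s : Set α} (hσs : σ ⁻¹' s = s) {f : α → ℝ}
    (hfσ : ∀ x, f (σ x) = -f x) : ∫ x in s, f x ∂μ = 0 := by
  have h := hσ.setIntegral_preimage_emb σ.measurableEmbedding f s
  simp only [hσs, hfσ, integral_neg] at h
  linarith

lemma fst_add_snd_ne_zero : LinearMap.fst ℝ ℝ ℝ + LinearMap.snd ℝ ℝ ℝ ≠ 0 := fun h ↦ by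
  simpa using DFunLike.congr_fun h (1, 0)

lemma snd_sub_fst_ne_zero : LinearMap.snd ℝ ℝ ℝ - LinearMap.fst ℝ ℝ ℝ ≠ 0 := fun h ↦ by
  simpa using DFunLike.congr_fun h (0, 1)

section QuadraticMap

/-- The map `(x, y) ↦ (2xy, x² + y² - 1)` from the square to the closure of `Ω`, that is, the
quotient map for the group generated by `(x, y) ↦ (y, x)` and `(x, y) ↦ (-x, -y)`. -/
def quadMap (q : ℝ × ℝ) : ℝ × ℝ := (2 * q.1 * q.2, q.1 ^ 2 + q.2 ^ 2 - 1)

/-- The triangle `|x| < y < 1`, a fundamental domain in the square for the group of symmetries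
of `quadMap`. -/
def fundTriangle : Set (ℝ × ℝ) := {q | |q.1| < q.2 ∧ q.2 < 1}

lemma continuous_quadMap : Continuous quadMap := by
  unfold quadMap; fun_prop

lemma quadMap_swap (q : ℝ × ℝ) : quadMap q.swap = quadMap q := by
  simp only [quadMap, Prod.fst_swap, Prod.snd_swap, Prod.mk.injEq]
  constructor <;> ring

lemma quadMap_neg (q : ℝ × ℝ) : quadMap (-q) = quadMap q := by
  simp [quadMap]

lemma roots_of_discrim_nonneg {t : ℝ × ℝ} (ht : 4 * t.2 ≤ t.1 ^ 2) :
    xRoot t + yRoot t = t.1 ∧ xRoot t * yRoot t = t.2 := by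
  have hsqrt := Real.sq_sqrt (sub_nonneg.2 ht)
  unfold xRoot yRoot
  constructor
  · ring
  · linear_combination -hsqrt / 4

lemma mem_omegaDom_iff {t : ℝ × ℝ} :
    t ∈ omegaDom ↔ 4 * t.2 < t.1 ^ 2 ∧ 0 < 1 - t.1 + t.2 ∧ 0 < 1 + t.1 + t.2 ∧ t.2 < 1 := by
  constructor
  · rintro ⟨x, y, hx, hxy, hy, rfl⟩
    refine ⟨?_, ?_, ?_, ?_⟩
    · nlinarith [mul_pos (sub_pos.2 hxy) (sub_pos.2 hxy)]
    · nlinarith [mul_pos (sub_pos.2 (hxy.trans hy)) (sub_pos.2 hy)]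
    · nlinarith [mul_pos (sub_pos.2 hx) (sub_pos.2 (hx.trans hxy))]
    · nlinarith
  · rintro ⟨hdisc, hsub, hadd, hlt⟩
    obtain ⟨hsum, hprod⟩ := roots_of_discrim_nonneg hdisc.le
    have hroots : xRoot t < yRoot t := by
      have := Real.sqrt_pos.2 (sub_pos.2 hdisc)
      unfold xRoot yRoot
      linarith
    refine ⟨xRoot t, yRoot t, ?_, hroots, ?_, Prod.ext hsum.symm hprod.symm⟩
    · nlinarith
    · nlinarith

lemma isOpen_omegaDom : IsOpen omegaDom := by
  have h : omegaDom = {t : ℝ × ℝ | 4 * t.2 < t.1 ^ 2} ∩ ({t | 0 < 1 - t.1 + t.2} ∩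
      ({t | 0 < 1 + t.1 + t.2} ∩ {t | t.2 < 1})) := Set.ext fun _ ↦ mem_omegaDom_iff
  rw [h]
  refine .inter ?_ (.inter ?_ (.inter ?_ ?_)) <;> exact isOpen_lt (by fun_prop) (by fun_prop)

lemma quadMap_mem_omegaDom {q : ℝ × ℝ} (h₁ : |q.1| < 1) (h₂ : |q.2| < 1)
    (hsub : q.2 - q.1 ≠ 0) (hadd : q.1 + q.2 ≠ 0) : quadMap q ∈ omegaDom := by
  rw [← sq_lt_one_iff_abs_lt_one] at h₁ h₂
  rw [mem_omegaDom_iff]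
  simp only [quadMap]
  refine ⟨?_, ?_, ?_, by linarith⟩
  · nlinarith [mul_pos (sub_pos.2 h₁) (sub_pos.2 h₂)]
  · linarith [pow_pos (abs_pos.2 hsub) 2, sq_abs (q.2 - q.1)]
  · linarith [pow_pos (abs_pos.2 hadd) 2, sq_abs (q.1 + q.2)]

lemma fundTriangle_eq_inter :
    fundTriangle =
      (Ioo (-1) 1 ×ˢ Ioo (-1) 1 ∩ {q : ℝ × ℝ | 0 < q.1 + q.2}) ∩ {q | 0 < q.2 - q.1} := by
  ext q
  simp only [fundTriangle, mem_ofPred_eq, mem_inter_iff, mem_prod, mem_Ioo, abs_lt]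
  constructor
  · rintro ⟨⟨h₁, h₂⟩, h₃⟩
    refine ⟨⟨⟨⟨?_, ?_⟩, ?_, ?_⟩, ?_⟩, ?_⟩ <;> linarith
  · rintro ⟨⟨⟨-, -, h₁⟩, h₂⟩, h₃⟩
    refine ⟨⟨?_, ?_⟩, h₁⟩ <;> linarith

lemma measurableSet_fundTriangle : MeasurableSet fundTriangle := by
  rw [fundTriangle_eq_inter]
  exact ((measurableSet_Ioo.prod measurableSet_Ioo).inter
    (measurableSet_lt (by fun_prop) (by fun_prop))).inter
    (measurableSet_lt (by fun_prop) (by fun_prop))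

lemma quadMap_image_fundTriangle : quadMap '' fundTriangle = omegaDom := by
  apply Subset.antisymm
  · rintro _ ⟨q, ⟨hq, hq₂⟩, rfl⟩
    obtain ⟨h₁, h₂⟩ := abs_lt.1 hq
    exact quadMap_mem_omegaDom (hq.trans hq₂) (by rwa [abs_of_pos ((abs_nonneg _).trans_lt hq)])
      (sub_pos.2 h₂).ne' (by linarith : 0 < q.1 + q.2).ne'
  · intro t ht
    obtain ⟨hdisc, hsub, hadd, hlt⟩ := mem_omegaDom_iff.1 ht
    set A := √(1 + t.1 + t.2)
    set B := √(1 - t.1 + t.2)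
    have hA : 0 < A := Real.sqrt_pos.2 hadd
    have hB : 0 < B := Real.sqrt_pos.2 hsub
    have hA2 : A ^ 2 = 1 + t.1 + t.2 := Real.sq_sqrt hadd.le
    have hB2 : B ^ 2 = 1 - t.1 + t.2 := Real.sq_sqrt hsub.le
    have hAB : A * B < 1 - t.2 := by
      refine lt_of_pow_lt_pow_left₀ 2 (by linarith) ?_
      rw [mul_pow, hA2, hB2]
      linarith
    refine ⟨((A - B) / 2, (A + B) / 2), ⟨abs_lt.2 ⟨?_, ?_⟩, ?_⟩, Prod.ext ?_ ?_⟩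
    · linarith
    · linarith
    · dsimp only
      nlinarith
    · simp only [quadMap]
      linarith
    · simp only [quadMap]
      linarith

lemma injOn_quadMap : InjOn quadMap fundTriangle := by
  rintro p ⟨hp, -⟩ q ⟨hq, -⟩ h
  obtain ⟨hp₁, hp₂⟩ := abs_lt.1 hp
  obtain ⟨hq₁, hq₂⟩ := abs_lt.1 hq
  obtain ⟨h₁, h₂⟩ := Prod.mk.inj h
  have hadd : p.1 + p.2 = q.1 + q.2 :=
    (sq_eq_sq₀ (by linarith) (by linarith)).1 (by linarith)
  have hsub : p.2 - p.1 = q.2 - q.1 :=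
    (sq_eq_sq₀ (by linarith) (by linarith)).1 (by linarith)
  exact Prod.ext (by linarith) (by linarith)

/-- The derivative of `quadMap`. -/
def quadMapDeriv (q : ℝ × ℝ) : ℝ × ℝ →L[ℝ] ℝ × ℝ :=
  (Matrix.toLin (.finTwoProd ℝ) (.finTwoProd ℝ)
    !![2 * q.2, 2 * q.1; 2 * q.1, 2 * q.2]).toContinuousLinearMap

lemma hasFDerivAt_quadMap (q : ℝ × ℝ) : HasFDerivAt quadMap (quadMapDeriv q) q := by
  have hfst : HasFDerivAt (fun p : ℝ × ℝ ↦ p.1) (ContinuousLinearMap.fst ℝ ℝ ℝ) q :=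
    hasFDerivAt_fst
  have hsnd : HasFDerivAt (fun p : ℝ × ℝ ↦ p.2) (ContinuousLinearMap.snd ℝ ℝ ℝ) q :=
    hasFDerivAt_snd
  refine (((hfst.const_mul 2).mul hsnd).prodMk
    (((hfst.pow 2).add (hsnd.pow 2)).sub_const 1)).congr_fderiv ?_
  rw [quadMapDeriv, Matrix.toLin_finTwoProd_toContinuousLinearMap]
  ext <;> simp [mul_comm]

lemma abs_det_quadMapDeriv (q : ℝ × ℝ) : |(quadMapDeriv q).det| = 4 * |q.1 ^ 2 - q.2 ^ 2| := by
  have hdet : (quadMapDeriv q).det = 4 * (q.2 ^ 2 - q.1 ^ 2) := by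
    simp only [quadMapDeriv, LinearMap.det_toContinuousLinearMap, LinearMap.det_toLin,
      Matrix.det_fin_two_of]
    ring
  rw [hdet, abs_mul, abs_sub_comm, abs_of_pos (four_pos (α := ℝ))]

end QuadraticMap

section Transport

lemma neg_preimage_sqDom : Neg.neg ⁻¹' sqDom = sqDom := by
  ext q
  simp [sqDom, and_comm]

lemma swap_preimage_sqDom : Prod.swap ⁻¹' sqDom = sqDom := preimage_swap_prod _ _

lemma setLIntegral_sqDom_eq_four_mul {f : ℝ × ℝ → ℝ≥0∞} (hf : Measurable f)
    (hneg : ∀ q, f (-q) = f q) (hswap : ∀ q, f q.swap = f q) :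
    ∫⁻ q in sqDom, f q = 4 * ∫⁻ q in fundTriangle, f q := by
  have hinterior : sqDom =ᵐ[volume] (Ioo (-1) 1 ×ˢ Ioo (-1) 1 : Set (ℝ × ℝ)) :=
    (Measure.set_prod_ae_eq Ioo_ae_eq_Icc Ioo_ae_eq_Icc).symm
  let S : Set (ℝ × ℝ) := Ioo (-1) 1 ×ˢ Ioo (-1) 1
  let T : Set (ℝ × ℝ) := S ∩ {q | 0 < q.1 + q.2}
  have hS : MeasurableSet S := measurableSet_Ioo.prod measurableSet_Ioo
  have hT : MeasurableSet T := hS.inter (measurableSet_lt (by fun_prop) (by fun_prop))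
  have hnegS : Neg.neg ⁻¹' S = S := by
    ext q
    simp [S, neg_lt, and_comm]
  have hswapT : Prod.swap ⁻¹' T = T := by
    rw [preimage_inter, preimage_swap_prod]
    simp only [T, S, preimage_ofPred_eq, Prod.fst_swap, Prod.snd_swap, add_comm]
  calc ∫⁻ q in sqDom, f q = ∫⁻ q in S, f q := setLIntegral_congr hinterior
    _ = 2 * ∫⁻ q in T, f q := setLIntegral_eq_two_mul_of_reflection fst_add_snd_ne_zero
        (Measure.measurePreserving_neg _) (fun q ↦ map_neg _ q) hS hnegS hf hneg
    _ = 2 * (2 * ∫⁻ q in fundTriangle, f q) := by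
      rw [fundTriangle_eq_inter]
      congr 1
      exact setLIntegral_eq_two_mul_of_reflection snd_sub_fst_ne_zero
        Measure.measurePreserving_swap (fun q ↦ by simp) hT hswapT hf hswap
    _ = 4 * ∫⁻ q in fundTriangle, f q := by
      rw [← mul_assoc]; norm_num

lemma setLIntegral_omegaDom {f : ℝ × ℝ → ℝ≥0∞} (hf : Measurable f) :
    ∫⁻ t in omegaDom, f t =
      ∫⁻ q in sqDom, ENNReal.ofReal |q.1 ^ 2 - q.2 ^ 2| * f (quadMap q) := by
  have hquad := continuous_quadMap.measurable
  have hswap : ∀ q : ℝ × ℝ, |q.2 ^ 2 - q.1 ^ 2| = |q.1 ^ 2 - q.2 ^ 2| := fun _ ↦ abs_sub_comm _ _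
  rw [setLIntegral_sqDom_eq_four_mul (by fun_prop) (fun q ↦ by simp [quadMap_neg])
      (fun q ↦ by simp [quadMap_swap, hswap]),
    ← quadMap_image_fundTriangle, lintegral_image_eq_lintegral_abs_det_fderiv_mul volume
      measurableSet_fundTriangle (fun q _ ↦ (hasFDerivAt_quadMap q).hasFDerivWithinAt)
      injOn_quadMap, ← lintegral_const_mul _ (by fun_prop)]
  simp only [abs_det_quadMapDeriv, ENNReal.ofReal_mul zero_le_four, ENNReal.ofReal_ofNat,
    mul_assoc]

lemma measurePreserving_quadMap :
    MeasurePreserving quadMap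
      ((volume.restrict sqDom).withDensity fun q ↦ ENNReal.ofReal |q.1 ^ 2 - q.2 ^ 2|)
      (volume.restrict omegaDom) := by
  have hquad := continuous_quadMap.measurable
  refine ⟨hquad, Measure.ext_of_lintegral _ fun f hf ↦ ?_⟩
  rw [lintegral_map hf hquad, setLIntegral_omegaDom hf]
  exact lintegral_withDensity_eq_lintegral_mul _ (by fun_prop) (hf.comp hquad)

/-- The weight `𝒲(x, y) = W(2xy, x² + y² - 1) |x² - y²|` on the square attached to a weight `W`
on `Ω`. -/
def squareWeight (W : ℝ × ℝ → ℝ) (q : ℝ × ℝ) : ℝ := W (quadMap q) * |q.1 ^ 2 - q.2 ^ 2|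

lemma setIntegral_squareWeight {H : ℝ × ℝ → ℝ}
    (hH : AEStronglyMeasurable H (volume.restrict omegaDom)) :
    ∫ q in sqDom, squareWeight H q = ∫ t in omegaDom, H t := by
  rw [← measurePreserving_quadMap.map_eq] at hH ⊢
  rw [integral_map continuous_quadMap.aemeasurable hH,
    integral_withDensity_eq_integral_toReal_smul (by fun_prop) (by simp)]
  simp [squareWeight, mul_comm]

lemma integrableOn_squareWeight {H : ℝ × ℝ → ℝ} (hH : IntegrableOn H omegaDom) :
    IntegrableOn (squareWeight H) sqDom := by
  have h := measurePreserving_quadMap.integrable_comp_of_integrable hH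
  rw [integrable_withDensity_iff (by fun_prop) (by simp)] at h
  refine h.congr (ae_of_all _ fun q ↦ ?_)
  simp [squareWeight]

end Transport

section SemiInvariants

open MvPolynomial

lemma totalDegree_aeval_le {σ τ R : Type*} [CommSemiring R] {f : σ → MvPolynomial τ R} {d : ℕ}
    (hf : ∀ i, (f i).totalDegree ≤ d) (P : MvPolynomial σ R) :
    (aeval f P).totalDegree ≤ d * P.totalDegree := by
  rw [aeval_def, eval₂_eq]
  refine totalDegree_finsetSum_le fun m hm ↦ ?_
  calc (C (P.coeff m) * ∏ i ∈ m.support, f i ^ m i).totalDegree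
      ≤ ∑ i ∈ m.support, (f i ^ m i).totalDegree := by
        refine (totalDegree_mul _ _).trans ?_
        rw [totalDegree_C, zero_add]
        exact totalDegree_finsetProd _ _
    _ ≤ ∑ i ∈ m.support, d * m i := Finset.sum_le_sum fun i _ ↦
        (totalDegree_pow _ _).trans (by rw [mul_comm d]; gcongr; exact hf i)
    _ = d * m.sum fun _ k ↦ k := (Finset.mul_sum _ _ _).symm
    _ ≤ d * P.totalDegree := Nat.mul_le_mul_left _ (le_totalDegree hm)

lemma continuous_evalP (P : MvPolynomial (Fin 2) ℝ) : Continuous (evalP P) :=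
  P.continuous_eval.comp (by fun_prop)

lemma evalP_mul (P Q : MvPolynomial (Fin 2) ℝ) (q : ℝ × ℝ) :
    evalP (P * Q) q = evalP P q * evalP Q q :=
  map_mul _ P Q

lemma evalP_smul (c : ℝ) (P : MvPolynomial (Fin 2) ℝ) (q : ℝ × ℝ) :
    evalP (c • P) q = c * evalP P q :=
  smul_eval _ P c

lemma evalP_sum {ι : Type*} (s : Finset ι) (P : ι → MvPolynomial (Fin 2) ℝ) (q : ℝ × ℝ) :
    evalP (∑ i ∈ s, P i) q = ∑ i ∈ s, evalP (P i) q :=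
  map_sum _ P s

lemma evalP_quadSub (P : MvPolynomial (Fin 2) ℝ) (q : ℝ × ℝ) :
    evalP (quadSub P) q = evalP P (quadMap q) := by
  simp only [evalP, quadSub, ← coe_aeval_eq_eval, RingHom.coe_coe]
  rw [comp_aeval_apply]
  congr 2
  ext i
  fin_cases i <;> simp [quadMap]

lemma totalDegree_quadSub_le (P : MvPolynomial (Fin 2) ℝ) :
    (quadSub P).totalDegree ≤ 2 * P.totalDegree := by
  refine totalDegree_aeval_le (Fin.forall_fin_two.2 ⟨?_, ?_⟩) P
  · have h : (2 * X 0 * X 1 : MvPolynomial (Fin 2) ℝ) = C 2 * (X 0 * X 1) := by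
      rw [← mul_assoc, map_ofNat]
    rw [Matrix.cons_val_zero, h]
    refine (totalDegree_mul _ _).trans ?_
    rw [totalDegree_C, zero_add]
    exact (totalDegree_mul _ _).trans (by simp)
  · refine (totalDegree_sub_C_le _ 1).trans ?_
    exact (totalDegree_add _ _).trans (by simp)

/-- The polynomial `(x - y)^i (x + y)^j`, which is multiplied by `(-1)^i` under
`(x, y) ↦ (y, x)` and by `(-1)^(i+j)` under `(x, y) ↦ (-x, -y)`. -/
def semiInvariant (i j : ℕ) : MvPolynomial (Fin 2) ℝ := (X 0 - X 1) ^ i * (X 0 + X 1) ^ j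

/-- The polynomial `(1 - u + v)^i (1 + u + v)^j` in the coordinates of `Ω`, that is,
`(x - y)^(2i) (x + y)^(2j)` in the coordinates of the square. -/
def semiInvariantSq (i j : ℕ) : MvPolynomial (Fin 2) ℝ :=
  (1 - X 0 + X 1) ^ i * (1 + X 0 + X 1) ^ j

lemma semiInvariant_mul (i j k l : ℕ) :
    semiInvariant i j * semiInvariant k l = semiInvariant (i + k) (j + l) := by
  unfold semiInvariant; ring

lemma quadSub_semiInvariantSq (i j : ℕ) :
    quadSub (semiInvariantSq i j) = semiInvariant (2 * i) (2 * j) := by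
  simp only [quadSub, semiInvariantSq, semiInvariant, map_mul, map_pow, map_add, map_sub, map_one,
    aeval_X, pow_mul, Matrix.cons_val_zero, Matrix.cons_val_one]
  congr 2 <;> ring

lemma evalP_semiInvariant (i j : ℕ) (q : ℝ × ℝ) :
    evalP (semiInvariant i j) q = (q.1 - q.2) ^ i * (q.1 + q.2) ^ j := by
  simp [evalP, semiInvariant]

lemma totalDegree_pow_mul_pow_le {σ R : Type*} [CommSemiring R] {A B : MvPolynomial σ R}
    (hA : A.totalDegree ≤ 1) (hB : B.totalDegree ≤ 1) (i j : ℕ) :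
    (A ^ i * B ^ j).totalDegree ≤ i + j :=
  (totalDegree_mul _ _).trans <| add_le_add
    ((totalDegree_pow _ _).trans (mul_le_of_le_one_right' hA))
    ((totalDegree_pow _ _).trans (mul_le_of_le_one_right' hB))

lemma totalDegree_semiInvariant_le (i j : ℕ) : (semiInvariant i j).totalDegree ≤ i + j :=
  totalDegree_pow_mul_pow_le ((totalDegree_sub _ _).trans (by simp))
    ((totalDegree_add _ _).trans (by simp)) i j

lemma totalDegree_semiInvariantSq_le (i j : ℕ) : (semiInvariantSq i j).totalDegree ≤ i + j := by
  refine totalDegree_pow_mul_pow_le ((totalDegree_add _ _).trans (max_le ?_ (by simp)))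
    ((totalDegree_add _ _).trans (max_le ?_ (by simp))) i j
  · exact (totalDegree_sub _ _).trans (by simp)
  · exact (totalDegree_add _ _).trans (by simp)

lemma exists_eq_aeval_sub_add (P : MvPolynomial (Fin 2) ℝ) :
    ∃ Q : MvPolynomial (Fin 2) ℝ,
      Q.totalDegree ≤ P.totalDegree ∧ aeval ![X 0 - X 1, X 0 + X 1] Q = P := by
  let f : Fin 2 → MvPolynomial (Fin 2) ℝ := ![C (1 / 2) * (X 1 + X 0), C (1 / 2) * (X 1 - X 0)]
  have hf (i : Fin 2) : (f i).totalDegree ≤ 1 := by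
    fin_cases i <;> refine (totalDegree_mul _ _).trans ?_ <;> rw [totalDegree_C, zero_add]
    · exact (totalDegree_add _ _).trans (by simp)
    · exact (totalDegree_sub _ _).trans (by simp)
  refine ⟨aeval f P, by simpa using totalDegree_aeval_le hf P, ?_⟩
  have hhalf : (C (1 / 2) * 2 : MvPolynomial (Fin 2) ℝ) = 1 := by
    rw [← map_ofNat C 2, ← map_mul]; norm_num
  have hinv : (fun i ↦ aeval ![X 0 - X 1, X 0 + X 1] (f i)) =
      (X : Fin 2 → MvPolynomial (Fin 2) ℝ) := by
    refine funext (Fin.forall_fin_two.2 ⟨?_, ?_⟩) <;>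
      simp only [f, Matrix.cons_val_zero, Matrix.cons_val_one, map_mul, map_add, map_sub, aeval_X,
        algHom_C, algebraMap_eq]
    · linear_combination X 0 * hhalf
    · linear_combination X 1 * hhalf
  rw [comp_aeval_apply, hinv, aeval_X_left_apply]

lemma aeval_sub_add_eq_sum (Q : MvPolynomial (Fin 2) ℝ) :
    aeval ![X 0 - X 1, X 0 + X 1] Q =
      ∑ m ∈ Q.support, C (Q.coeff m) * semiInvariant (m 0) (m 1) := by
  simp only [aeval_def, eval₂_eq', algebraMap_eq, Fin.prod_univ_two, Matrix.cons_val_zero,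
    Matrix.cons_val_one, semiInvariant]

lemma semiInvariant_eq_mul_quadSub (i j : ℕ) :
    semiInvariant i j =
      semiInvariant (i % 2) (j % 2) * quadSub (semiInvariantSq (i / 2) (j / 2)) := by
  rw [quadSub_semiInvariantSq, semiInvariant_mul, Nat.mod_add_div, Nat.mod_add_div]

lemma exists_eq_sum_semiInvariant_mul_quadSub {n : ℕ} {P : MvPolynomial (Fin 2) ℝ}
    (hP : P.totalDegree ≤ n) :
    ∃ c : Fin 2 × Fin 2 → MvPolynomial (Fin 2) ℝ,
      (∀ p, (c p).totalDegree ≤ (n - (p.1 + p.2)) / 2) ∧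
      P = ∑ p with (p.1 + p.2 : ℕ) ≤ n, semiInvariant p.1 p.2 * quadSub (c p) := by
  obtain ⟨Q, hQP, rfl⟩ := exists_eq_aeval_sub_add P
  have hdeg {m} (hm : m ∈ Q.support) : m 0 + m 1 ≤ n := by
    have := (le_totalDegree hm).trans (hQP.trans hP)
    rwa [Finsupp.sum_fintype _ _ fun _ ↦ rfl, Fin.sum_univ_two] at this
  let parity (m : Fin 2 →₀ ℕ) : Fin 2 × Fin 2 := (Fin.ofNat 2 (m 0), Fin.ofNat 2 (m 1))
  refine ⟨fun p ↦ ∑ m ∈ Q.support with parity m = p,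
    C (Q.coeff m) * semiInvariantSq (m 0 / 2) (m 1 / 2), fun p ↦ ?_, ?_⟩
  · refine totalDegree_finsetSum_le fun m hm ↦ ?_
    obtain ⟨hmQ, rfl⟩ := Finset.mem_filter.1 hm
    have hle : (semiInvariantSq (m 0 / 2) (m 1 / 2)).totalDegree ≤ m 0 / 2 + m 1 / 2 :=
      totalDegree_semiInvariantSq_le _ _
    refine (totalDegree_mul _ _).trans ?_
    have := hdeg hmQ
    simp only [totalDegree_C, parity, Fin.val_ofNat]
    omega
  · have hmaps : ∀ m ∈ Q.support,
        parity m ∈ ({p | (p.1 + p.2 : ℕ) ≤ n} : Finset (Fin 2 × Fin 2)) := fun m hm ↦ by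
      have := hdeg hm
      simp only [Finset.mem_filter_univ, parity, Fin.val_ofNat]
      omega
    rw [aeval_sub_add_eq_sum, ← Finset.sum_fiberwise_of_maps_to hmaps]
    refine Finset.sum_congr rfl fun p _ ↦ ?_
    simp only [quadSub, map_sum, Finset.mul_sum]
    refine Finset.sum_congr rfl fun m hm ↦ ?_
    obtain ⟨-, rfl⟩ := Finset.mem_filter.1 hm
    rw [semiInvariant_eq_mul_quadSub, quadSub, map_mul, algHom_C, algebraMap_eq, mul_left_comm]
    rfl

lemma setIntegral_semiInvariant_eq_zero {i j : ℕ} (h : Odd i ∨ Odd j) (H : ℝ × ℝ → ℝ) :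
    ∫ q in sqDom, evalP (semiInvariant i j) q * squareWeight H q = 0 := by
  simp only [evalP_semiInvariant, squareWeight]
  rcases i.even_or_odd with hi | hi
  · have hj := h.resolve_left (Nat.not_odd_iff_even.2 hi)
    refine setIntegral_eq_zero_of_comp_eq_neg (σ := .neg (ℝ × ℝ))
      (Measure.measurePreserving_neg _) neg_preimage_sqDom fun q ↦ ?_
    have hsub : -q.1 - -q.2 = -(q.1 - q.2) := by ring
    simp only [MeasurableEquiv.neg_apply, quadMap_neg, Prod.fst_neg, Prod.snd_neg, hsub,
      ← neg_add, hi.neg_pow, hj.neg_pow, even_two.neg_pow, mul_neg, neg_mul]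
  · refine setIntegral_eq_zero_of_comp_eq_neg (σ := .prodComm) Measure.measurePreserving_swap
      swap_preimage_sqDom fun q ↦ ?_
    change (q.2 - q.1) ^ i * (q.2 + q.1) ^ j * (H (quadMap q.swap) * |q.2 ^ 2 - q.1 ^ 2|) = _
    rw [quadMap_swap, ← neg_sub q.1, hi.neg_pow, add_comm q.2, abs_sub_comm]
    ring

lemma setIntegral_semiInvariant_two_mul (i j : ℕ) {H : ℝ × ℝ → ℝ}
    (hH : AEStronglyMeasurable H (volume.restrict omegaDom)) :
    ∫ q in sqDom, evalP (semiInvariant (2 * i) (2 * j)) q * squareWeight H q =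
      ∫ t in omegaDom, evalP (semiInvariantSq i j) t * H t := by
  refine Eq.trans ?_
    (setIntegral_squareWeight ((continuous_evalP _).aestronglyMeasurable.mul hH))
  simp only [← quadSub_semiInvariantSq, evalP_quadSub, squareWeight, mul_assoc]

lemma setIntegral_isotypic_mul {W : ℝ × ℝ → ℝ}
    (hW : AEStronglyMeasurable W (volume.restrict omegaDom)) (p r : Fin 2 × Fin 2)
    (P Q : MvPolynomial (Fin 2) ℝ) :
    ∫ q in sqDom, evalP (semiInvariant p.1 p.2 * quadSub P * (semiInvariant r.1 r.2 * quadSub Q)) q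
        * squareWeight W q =
      if p = r then ∫ t in omegaDom, evalP (semiInvariantSq p.1 p.2 * (P * Q)) t * W t else 0 := by
  have hcollect (q : ℝ × ℝ) :
      evalP (semiInvariant p.1 p.2 * quadSub P * (semiInvariant r.1 r.2 * quadSub Q)) q
        * squareWeight W q =
      evalP (semiInvariant (p.1 + r.1) (p.2 + r.2)) q
        * squareWeight (fun t ↦ evalP (P * Q) t * W t) q := by
    rw [mul_mul_mul_comm, semiInvariant_mul]
    simp only [squareWeight, ← evalP_quadSub, quadSub, map_mul]
    simp only [evalP_mul]
    ring
  simp only [hcollect]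
  split_ifs with hpr
  · subst hpr
    rw [← two_mul, ← two_mul]
    refine (setIntegral_semiInvariant_two_mul _ _
      ((continuous_evalP _).aestronglyMeasurable.mul hW)).trans ?_
    simp only [evalP_mul, mul_assoc, Pi.mul_apply]
  · refine setIntegral_semiInvariant_eq_zero ?_ _
    rw [Prod.ext_iff, Fin.ext_iff, Fin.ext_iff] at hpr
    simp only [Nat.odd_iff]
    omega

end SemiInvariants

section ReproducingKernel

variable {D : Set (ℝ × ℝ)} {W : ℝ × ℝ → ℝ} {n : ℕ} {K : ℝ × ℝ → ℝ × ℝ → ℝ}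

lemma IsRK.continuous (hK : IsRK D W n K) : Continuous fun p : (ℝ × ℝ) × (ℝ × ℝ) ↦ K p.1 p.2 := by
  obtain ⟨⟨KP, hKP⟩, -, -⟩ := hK
  simp only [hKP]
  exact KP.continuous_eval.comp (by fun_prop)

lemma IsRK.integrableOn (hK : IsRK D W 0 K) (hD : D.Nonempty) : IntegrableOn W D := by
  obtain ⟨x, hx⟩ := hD
  obtain ⟨P, hP, hKP⟩ := hK.2.1 x hx
  obtain ⟨c, rfl⟩ : ∃ c, P = MvPolynomial.C c :=
    ⟨_, MvPolynomial.totalDegree_eq_zero_iff_eq_C.1 (Nat.le_zero.1 hP)⟩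
  have hone : ∫ y in D, c * W y = 1 := by
    simpa [hKP, evalP] using hK.2.2 1 (by simp) x hx
  have hint : IntegrableOn (fun y ↦ c * W y) D :=
    not_imp_comm.1 integral_undef (by rw [hone]; exact one_ne_zero)
  have hc : c ≠ 0 := by
    rintro rfl
    simp at hone
  exact (integrable_const_mul_iff hc.isUnit W).1 hint

lemma IsRK.eq_evalP_of_reproducing (hK : IsRK D W n K) {x : ℝ × ℝ} (hx : x ∈ D)
    {R : MvPolynomial (Fin 2) ℝ} (hR : R.totalDegree ≤ n)
    (hRep : ∀ P : MvPolynomial (Fin 2) ℝ, P.totalDegree ≤ n →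
      ∫ z in D, evalP (R * P) z * W z = evalP P x) {y : ℝ × ℝ} (hy : y ∈ D) :
    K x y = evalP R y := by
  obtain ⟨Px, hPx, hKx⟩ := hK.2.1 x hx
  obtain ⟨Py, hPy, hKy⟩ := hK.2.1 y hy
  have hsymm : evalP Px y = evalP Py x := by
    rw [← hK.2.2 Px hPx y hy, ← hK.2.2 Py hPy x hx]
    simp only [hKx, hKy, mul_comm (evalP Px _)]
  calc K x y = evalP Py x := by rw [hKx, hsymm]
    _ = ∫ z in D, evalP (R * Py) z * W z := (hRep Py hPy).symm
    _ = ∫ z in D, K y z * evalP R z * W z := by simp only [evalP_mul, hKy, mul_comm]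
    _ = evalP R y := hK.2.2 R hR y hy

/-- The linear functional `P ↦ ∫ P W` on polynomials, for an integrable weight `W` on the
square. -/
def momentFunctional (hW : IntegrableOn W sqDom) : MvPolynomial (Fin 2) ℝ →ₗ[ℝ] ℝ where
  toFun P := ∫ q in sqDom, evalP P q * W q
  map_add' P Q := by
    have hint (P : MvPolynomial (Fin 2) ℝ) : IntegrableOn (fun q ↦ evalP P q * W q) sqDom :=
      hW.continuousOn_mul (continuous_evalP P).continuousOn (isCompact_Icc.prod isCompact_Icc)
    rw [← integral_add (hint P) (hint Q)]
    simp only [evalP, map_add, add_mul]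
  map_smul' c P := by
    rw [RingHom.id_apply, smul_eq_mul, ← integral_const_mul]
    simp only [evalP_smul, mul_assoc]

end ReproducingKernel

section Decomposition

variable {W : ℝ × ℝ → ℝ} {n : ℕ} {d : Fin 2 × Fin 2 → ℝ} {V : Fin 2 × Fin 2 → ℝ × ℝ → ℝ}
  {k : Fin 2 × Fin 2 → ℝ × ℝ → ℝ × ℝ → ℝ} {K : ℝ × ℝ → ℝ × ℝ → ℝ}

lemma setIntegral_evalP_sum_isotypic_mul (hW : IntegrableOn W omegaDom)
    (s : Finset (Fin 2 × Fin 2)) (a : Fin 2 × Fin 2 → ℝ)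
    (Q c : Fin 2 × Fin 2 → MvPolynomial (Fin 2) ℝ) :
    ∫ q in sqDom, evalP ((∑ p ∈ s, a p • (semiInvariant p.1 p.2 * quadSub (Q p))) *
        ∑ p ∈ s, semiInvariant p.1 p.2 * quadSub (c p)) q * squareWeight W q =
      ∑ p ∈ s, a p *
        ∫ t in omegaDom, evalP (semiInvariantSq p.1 p.2 * (Q p * c p)) t * W t := by
  change momentFunctional (integrableOn_squareWeight hW) _ = _
  simp only [Finset.sum_mul_sum, smul_mul_assoc, map_sum, map_smul, smul_eq_mul]
  refine Finset.sum_congr rfl fun p hp ↦ ?_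
  rw [← Finset.mul_sum]
  congr 1
  refine (Finset.sum_congr rfl fun r _ ↦
    setIntegral_isotypic_mul hW.aestronglyMeasurable p r (Q p) (c r)).trans ?_
  rw [Finset.sum_ite_eq, if_pos hp]

lemma IsRK.eq_sum_isotypic_of_mem_omegaDom (hW : IntegrableOn W omegaDom)
    (hV : ∀ p, ∀ t ∈ omegaDom, V p t = d p * evalP (semiInvariantSq p.1 p.2) t * W t)
    (hk : ∀ p : Fin 2 × Fin 2, (p.1 + p.2 : ℕ) ≤ n →
      IsRK omegaDom (V p) ((n - (p.1 + p.2)) / 2) (k p))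
    (hK : IsRK sqDom (squareWeight W) n K) {x y : ℝ × ℝ} (hx : x ∈ sqDom) (hy : y ∈ sqDom)
    (hxΩ : quadMap x ∈ omegaDom) :
    K x y = ∑ p with (p.1 + p.2 : ℕ) ≤ n, d p * evalP (semiInvariant p.1 p.2) x *
      evalP (semiInvariant p.1 p.2) y * k p (quadMap x) (quadMap y) := by
  choose! Q hQ hkQ using fun p hp ↦ (hk p hp).2.1 (quadMap x) hxΩ
  let R := ∑ p with (p.1 + p.2 : ℕ) ≤ n, (d p * evalP (semiInvariant p.1 p.2) x) •
    (semiInvariant p.1 p.2 * quadSub (Q p))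
  have hR : R.totalDegree ≤ n := by
    refine MvPolynomial.totalDegree_finsetSum_le fun p hp ↦ ?_
    have hpn := (Finset.mem_filter_univ p).1 hp
    have hsemi := totalDegree_semiInvariant_le p.1 p.2
    have hquad := totalDegree_quadSub_le (Q p)
    have hQp := hQ p hpn
    refine (MvPolynomial.totalDegree_smul_le _ _).trans <|
      (MvPolynomial.totalDegree_mul _ _).trans ?_
    omega
  have hRep (P : MvPolynomial (Fin 2) ℝ) (hP : P.totalDegree ≤ n) :
      ∫ z in sqDom, evalP (R * P) z * squareWeight W z = evalP P x := by
    obtain ⟨c, hc, rfl⟩ := exists_eq_sum_semiInvariant_mul_quadSub hP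
    rw [setIntegral_evalP_sum_isotypic_mul hW]
    simp only [evalP_sum, evalP_mul, evalP_quadSub]
    refine Finset.sum_congr rfl fun p hp ↦ ?_
    have hpn := (Finset.mem_filter_univ p).1 hp
    rw [← (hk p hpn).2.2 (c p) (hc p) _ hxΩ, mul_comm (d p), mul_assoc, ← integral_const_mul]
    congr 1
    refine setIntegral_congr_fun isOpen_omegaDom.measurableSet fun t ht ↦ ?_
    simp only [hkQ p hpn, hV p t ht]
    ring
  rw [hK.eq_evalP_of_reproducing hx hR hRep hy]
  simp only [R, evalP_sum, evalP_smul, evalP_mul, evalP_quadSub]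
  refine Finset.sum_congr rfl fun p hp ↦ ?_
  rw [hkQ p ((Finset.mem_filter_univ p).1 hp)]
  ring

lemma sqDom_subset_closure_inter_preimage_omegaDom :
    sqDom ⊆ closure (sqDom ∩ quadMap ⁻¹' omegaDom) := by
  let S : Set (ℝ × ℝ) := Ioo (-1) 1 ×ˢ Ioo (-1) 1
  have hdense : Dense {q : ℝ × ℝ | q.2 - q.1 ≠ 0 ∧ q.1 + q.2 ≠ 0} :=
    Measure.dense_of_ae (μ := volume) ((ae_linearMap_ne_zero snd_sub_fst_ne_zero).and
      (ae_linearMap_ne_zero fst_add_snd_ne_zero))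
  have hclosure : closure S = sqDom := by
    rw [closure_prod_eq, closure_Ioo (by norm_num), sqDom]
  rw [← hclosure]
  refine closure_minimal ?_ isClosed_closure
  refine (hdense.open_subset_closure_inter (isOpen_Ioo.prod isOpen_Ioo)).trans
    (closure_mono fun q ⟨hqS, hqsub, hqadd⟩ ↦ ⟨hclosure ▸ subset_closure hqS, ?_⟩)
  exact quadMap_mem_omegaDom (abs_lt.2 hqS.1) (abs_lt.2 hqS.2) hqsub hqadd

theorem stmt_10_general (hW : IntegrableOn W omegaDom)
    (hV : ∀ p, ∀ t ∈ omegaDom, V p t = d p * evalP (semiInvariantSq p.1 p.2) t * W t)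
    (hk : ∀ p : Fin 2 × Fin 2, (p.1 + p.2 : ℕ) ≤ n →
      IsRK omegaDom (V p) ((n - (p.1 + p.2)) / 2) (k p))
    (hK : IsRK sqDom (squareWeight W) n K) {x y : ℝ × ℝ} (hx : x ∈ sqDom) (hy : y ∈ sqDom) :
    K x y = ∑ p with (p.1 + p.2 : ℕ) ≤ n, d p * evalP (semiInvariant p.1 p.2) x *
      evalP (semiInvariant p.1 p.2) y * k p (quadMap x) (quadMap y) := by
  have hK_cont : Continuous fun z ↦ K z y :=
    hK.continuous.comp (continuous_id.prodMk continuous_const)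
  have hk_cont (p : Fin 2 × Fin 2) (hp : p ∈ ({p | (p.1 + p.2 : ℕ) ≤ n} : Finset _)) :
      Continuous fun z ↦ k p (quadMap z) (quadMap y) :=
    (hk p ((Finset.mem_filter_univ p).1 hp)).continuous.comp
      (continuous_quadMap.prodMk continuous_const)
  refine EqOn.closure (fun z hz ↦ hK.eq_sum_isotypic_of_mem_omegaDom hW hV hk hz.1 hy hz.2) hK_cont
    (continuous_finsetSum _ fun p hp ↦ ?_) (sqDom_subset_closure_inter_preimage_omegaDom hx)
  exact ((continuous_const.mul (continuous_evalP _)).mul continuous_const).mul (hk_cont p hp)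

end Decomposition

section ProductWeight

/-- The weight `2 a w(x) w(y) (u² - 4v)^γ` on `Ω`, where `x < y` are the roots of
`t² - u t + v`. -/
def omegaWeight (w : ℝ → ℝ) (γ a : ℝ) (t : ℝ × ℝ) : ℝ :=
  2 * a * w (xRoot t) * w (yRoot t) * (t.1 ^ 2 - 4 * t.2) ^ γ

lemma evalP_semiInvariantSq (i j : ℕ) {t : ℝ × ℝ} (ht : t ∈ omegaDom) :
    evalP (semiInvariantSq i j) t =
      ((1 - xRoot t) ^ i * (1 + xRoot t) ^ j) * ((1 - yRoot t) ^ i * (1 + yRoot t) ^ j) := by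
  obtain ⟨hsum, hprod⟩ := roots_of_discrim_nonneg (mem_omegaDom_iff.1 ht).1.le
  have hsub : 1 - t.1 + t.2 = (1 - xRoot t) * (1 - yRoot t) := by
    rw [← hsum, ← hprod]; ring
  have hadd : 1 + t.1 + t.2 = (1 + xRoot t) * (1 + yRoot t) := by
    rw [← hsum, ← hprod]; ring
  have heval : evalP (semiInvariantSq i j) t = (1 - t.1 + t.2) ^ i * (1 + t.1 + t.2) ^ j := by
    simp [evalP, semiInvariantSq]
  rw [heval, hsub, hadd, mul_pow, mul_pow, mul_mul_mul_comm]

lemma omegaWeight_jacobi {a : ℝ} (ha : a ≠ 0) (b γ : ℝ) (w : ℝ → ℝ) (i j : ℕ) {t : ℝ × ℝ}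
    (ht : t ∈ omegaDom) :
    omegaWeight (fun x ↦ (1 - x) ^ i * (1 + x) ^ j * w x) γ b t =
      b / a * evalP (semiInvariantSq i j) t * omegaWeight w γ a t := by
  rw [evalP_semiInvariantSq i j ht]
  unfold omegaWeight
  field_simp

lemma nonempty_omegaDom : omegaDom.Nonempty :=
  ⟨_, 0, 1 / 2, by norm_num, by norm_num, by norm_num, rfl⟩

lemma sum_filter_isotypes {M : Type*} [AddCommMonoid M] (n : ℕ) (F : Fin 2 × Fin 2 → M) :
    ∑ p with (p.1 + p.2 : ℕ) ≤ n, F p =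
      F (0, 0) + (if 2 ≤ n then F (1, 1) else 0) + (if 1 ≤ n then F (0, 1) else 0) +
        if 1 ≤ n then F (1, 0) else 0 := by
  simp only [Finset.sum_filter, Fintype.sum_prod_type, Fin.sum_univ_two, Fin.val_zero, Fin.val_one,
    zero_add, add_zero, zero_le, if_true, one_add_one_eq_two]
  abel

end ProductWeight

/-- decomposition of the reproducing kernel of `Π_n²` in `L²(𝒲_γ)`
on the square into reproducing kernels on `Ω`. -/
theorem stmt_10
    (w : ℝ → ℝ) (hw0 : ∀ x, 0 ≤ w x)
    (hwi : IntegrableOn w (Icc (-1:ℝ) 1))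
    (hw1 : (∫ x in Icc (-1:ℝ) 1, w x) = 1)
    (hwm : ∀ k : ℕ, IntegrableOn (fun x => x ^ k * w x) (Icc (-1:ℝ) 1))
    (γ : ℝ) (hγ : -1 < γ)
    (a00 a11 a10 a01 : ℝ)
    (ha00p : 0 < a00) (ha11p : 0 < a11) (ha10p : 0 < a10) (ha01p : 0 < a01)
    (ha00 : (∫ q in sqDom, a00 * w q.1 * w q.2 * |q.1 - q.2| ^ (2*γ+1)) = 1)
    (ha11 : (∫ q in sqDom, a11 * ((1 - q.1) * (1 + q.1) * w q.1)
        * ((1 - q.2) * (1 + q.2) * w q.2) * |q.1 - q.2| ^ (2*γ+1)) = 1)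
    (ha10 : (∫ q in sqDom, a10 * ((1 - q.1) * w q.1)
        * ((1 - q.2) * w q.2) * |q.1 - q.2| ^ (2*γ+1)) = 1)
    (ha01 : (∫ q in sqDom, a01 * ((1 + q.1) * w q.1)
        * ((1 + q.2) * w q.2) * |q.1 - q.2| ^ (2*γ+1)) = 1)
    (W00 W11 W10 W01 : ℝ × ℝ → ℝ)
    (hW00 : ∀ q : ℝ × ℝ, W00 q
      = 2 * a00 * w (xRoot q) * w (yRoot q) * (q.1^2 - 4*q.2) ^ γ)
    (hW11 : ∀ q : ℝ × ℝ, W11 q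
      = 2 * a11 * ((1 - xRoot q) * (1 + xRoot q) * w (xRoot q))
        * ((1 - yRoot q) * (1 + yRoot q) * w (yRoot q)) * (q.1^2 - 4*q.2) ^ γ)
    (hW10 : ∀ q : ℝ × ℝ, W10 q
      = 2 * a10 * ((1 - xRoot q) * w (xRoot q))
        * ((1 - yRoot q) * w (yRoot q)) * (q.1^2 - 4*q.2) ^ γ)
    (hW01 : ∀ q : ℝ × ℝ, W01 q
      = 2 * a01 * ((1 + xRoot q) * w (xRoot q))
        * ((1 + yRoot q) * w (yRoot q)) * (q.1^2 - 4*q.2) ^ γ)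
    (CW : ℝ × ℝ → ℝ)
    (hCW : ∀ q : ℝ × ℝ, CW q = W00 (2*q.1*q.2, q.1^2 + q.2^2 - 1) * |q.1^2 - q.2^2|)
    (K00 K11 K10 K01 : ℕ → (ℝ × ℝ) → (ℝ × ℝ) → ℝ)
    (hK00 : ∀ n, IsRK omegaDom W00 n (K00 n))
    (hK11 : ∀ n, IsRK omegaDom W11 n (K11 n))
    (hK10 : ∀ n, IsRK omegaDom W10 n (K10 n))
    (hK01 : ∀ n, IsRK omegaDom W01 n (K01 n))
    (KC : ℕ → (ℝ × ℝ) → (ℝ × ℝ) → ℝ)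
    (hKC : ∀ n, IsRK sqDom CW n (KC n)) :
    ∀ n : ℕ, ∀ x y : ℝ × ℝ, x ∈ sqDom → y ∈ sqDom →
      KC n x y
        = K00 (n / 2) (2*x.1*x.2, x.1^2 + x.2^2 - 1) (2*y.1*y.2, y.1^2 + y.2^2 - 1)
          + (if 2 ≤ n then
              (a11 / a00) * (x.1^2 - x.2^2) * (y.1^2 - y.2^2)
                * K11 (n / 2 - 1) (2*x.1*x.2, x.1^2 + x.2^2 - 1) (2*y.1*y.2, y.1^2 + y.2^2 - 1)
            else 0)
          + (if 1 ≤ n then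
              (a01 / a00) * (x.1 + x.2) * (y.1 + y.2)
                * K01 ((n-1) / 2) (2*x.1*x.2, x.1^2 + x.2^2 - 1) (2*y.1*y.2, y.1^2 + y.2^2 - 1)
            else 0)
          + (if 1 ≤ n then
              (a10 / a00) * (x.1 - x.2) * (y.1 - y.2)
                * K10 ((n-1) / 2) (2*x.1*x.2, x.1^2 + x.2^2 - 1) (2*y.1*y.2, y.1^2 + y.2^2 - 1)
            else 0) := by
  intro n x y hx hy
  obtain rfl : W00 = omegaWeight w γ a00 := funext hW00
  obtain rfl : W01 = omegaWeight (fun x ↦ (1 + x) * w x) γ a01 := funext hW01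
  obtain rfl : W10 = omegaWeight (fun x ↦ (1 - x) * w x) γ a10 := funext hW10
  obtain rfl : W11 = omegaWeight (fun x ↦ (1 - x) * (1 + x) * w x) γ a11 := funext hW11
  obtain rfl : CW = squareWeight (omegaWeight w γ a00) := funext hCW
  let a (p : Fin 2 × Fin 2) : ℝ := !![a00, a01; a10, a11] p.1 p.2
  let k (p : Fin 2 × Fin 2) : ℝ × ℝ → ℝ × ℝ → ℝ :=
    !![K00 (n / 2), K01 ((n - 1) / 2); K10 ((n - 1) / 2), K11 (n / 2 - 1)] p.1 p.2
  have hk (p : Fin 2 × Fin 2) :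
      IsRK omegaDom (omegaWeight (fun x ↦ (1 - x) ^ p.1.val * (1 + x) ^ p.2.val * w x) γ (a p))
        ((n - (p.1 + p.2)) / 2) (k p) := by
    have hindex : (n - 2) / 2 = n / 2 - 1 := by omega
    fin_cases p
    · simpa [a, k] using hK00 (n / 2)
    · simpa [a, k] using hK01 ((n - 1) / 2)
    · simpa [a, k] using hK10 ((n - 1) / 2)
    · simpa [a, k, hindex] using hK11 (n / 2 - 1)
  rw [stmt_10_general ((hK00 0).integrableOn nonempty_omegaDom)
    (fun p t ht ↦ omegaWeight_jacobi ha00p.ne' (a p) γ w p.1 p.2 ht) (fun p _ ↦ hk p) (hKC n) hx hy,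
    sum_filter_isotypes]
  have hsq (z : ℝ × ℝ) : z.1 ^ 2 - z.2 ^ 2 = (z.1 - z.2) * (z.1 + z.2) := by ring
  simp [a, k, evalP_semiInvariant, quadMap, hsq, ha00p.ne']
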